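/- For every α with 0 ≤ α < 2, every β ≥ 0, and every a > 0, the integral ∫_0^∞ (y² − (α+1)(a−βy)²) / ((a−βy)² + y²)^{2+α/2} dy converges and equals F(α,β) / a^{1+α}. -/

import Mathlib

open MeasureTheory Real

/-- `F α β = β/(β²+1) − (α/(β²+1)^{1−α/2}) ∫_{−arctan β}^{π/2} cos^α θ dθ`. -/
noncomputable def F (α β : ℝ) : ℝ :=
  β / (β ^ 2 + 1) -
    α / (β ^ 2 + 1) ^ (1 - α / 2) * ∫ θ in (-Real.arctan β)..(Real.pi / 2), Real.cos θ ^ α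

/-!
The integrand is `K (a - β y, y)`, where `K = ∂ₓ (x / |(x, y)| ^ (2 + α))` is homogeneous of degree
`-(2 + α)`. The substitution `y = a / (β² + 1) * (β + tan θ)` writes the point `(a - β y, y)` as
`a / ((β² + 1) cos θ)` times `(X, Y) = (cos θ - β sin θ, β cos θ + sin θ)`, a vector of constant
length `√(β² + 1)`. By homogeneity the integral becomes a constant multiple of the integral of
`(Y² - (α + 1) X²) cos ^ α θ` over `(-arctan β, π / 2)`, and since `X' = -Y` and `Y' = X`,
this function differs from an exact derivative by `α cos ^ α θ`.
-/

section CosRpow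

theorem continuous_cos_rpow {p : ℝ} (hp : 0 ≤ p) : Continuous fun θ : ℝ => cos θ ^ p :=
  continuous_cos.rpow_const fun _ => Or.inr hp

theorem hasDerivAt_cos_rpow_add_one (α : ℝ) {θ : ℝ} (hθ : cos θ ≠ 0) :
    HasDerivAt (fun θ : ℝ => cos θ ^ (α + 1)) (-(α + 1) * (sin θ * cos θ ^ α)) θ := by
  convert (hasDerivAt_cos θ).rpow_const (p := α + 1) (Or.inl hθ) using 1
  rw [add_sub_cancel_right]
  ring

theorem intervalIntegrable_sin_mul_cos_rpow {α : ℝ} (hα : -1 < α) :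
    IntervalIntegrable (fun θ => sin θ * cos θ ^ α) volume 0 (π / 2) := by
  have hα' : α + 1 ≠ 0 := by linarith
  have hπ : 0 ≤ π / 2 := by positivity
  refine intervalIntegral.intervalIntegrable_deriv_of_nonneg
    (g := fun θ => -(α + 1)⁻¹ * cos θ ^ (α + 1)) ?_ ?_ ?_
  · exact ((continuous_cos_rpow (by linarith)).const_mul _).continuousOn
  · rw [min_eq_left hπ, max_eq_right hπ]
    intro θ hθ
    have hcos : cos θ ≠ 0 := (cos_pos_of_mem_Ioo ⟨by linarith [hθ.1], hθ.2⟩).ne'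
    refine ((hasDerivAt_cos_rpow_add_one α hcos).const_mul (-(α + 1)⁻¹)).congr_deriv ?_
    rw [← mul_assoc, neg_mul_neg, inv_mul_cancel₀ hα', one_mul]
  · rw [min_eq_left hπ, max_eq_right hπ]
    intro θ hθ
    have hsin : 0 ≤ sin θ := sin_nonneg_of_nonneg_of_le_pi hθ.1.le (by linarith [hθ.2])
    have hcos : 0 ≤ cos θ := cos_nonneg_of_mem_Icc ⟨by linarith [hθ.1], hθ.2.le⟩
    positivity

theorem intervalIntegrable_cos_rpow {α : ℝ} (hα : -1 < α) :
    IntervalIntegrable (fun θ => cos θ ^ α) volume (-(π / 2)) (π / 2) := by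
  -- Near `π / 2` the function `sin * cos ^ α` is the nonnegative derivative of a continuous
  -- function; `cos ^ α = sin * (sin * cos ^ α) + cos ^ (α + 2)` reduces the claim to it.
  have right : IntervalIntegrable (fun θ => cos θ ^ α) volume 0 (π / 2) := by
    have hcos₂ := continuous_cos_rpow (p := α + 2) (by linarith)
    refine (((intervalIntegrable_sin_mul_cos_rpow hα).continuousOn_mul
      continuous_sin.continuousOn).add (hcos₂.intervalIntegrable 0 (π / 2))).congr_uIoo ?_
    rw [Set.uIoo_of_le (by positivity)]
    intro θ hθ
    have hcos : 0 < cos θ := cos_pos_of_mem_Ioo ⟨by linarith [hθ.1, pi_pos], hθ.2⟩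
    change sin θ * (sin θ * cos θ ^ α) + cos θ ^ (α + 2) = cos θ ^ α
    rw [rpow_add hcos, rpow_two]
    linear_combination cos θ ^ α * sin_sq_add_cos_sq θ
  have left : IntervalIntegrable (fun θ => cos θ ^ α) volume (-(π / 2)) 0 := by
    rw [IntervalIntegrable.iff_comp_neg]
    simpa only [cos_neg, neg_neg, neg_zero] using right.symm
  exact left.trans right

end CosRpow

theorem cos_arctan_rpow (β p : ℝ) : cos (arctan β) ^ p = (β ^ 2 + 1) ^ (-p / 2) := by
  have hβ : 0 < β ^ 2 + 1 := by positivity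
  rw [cos_arctan, one_div, add_comm, sqrt_eq_rpow, ← rpow_neg hβ.le, ← rpow_mul hβ.le]
  congr 1
  ring

theorem neg_arctan_le_pi_div_two (β : ℝ) : -arctan β ≤ π / 2 := by
  linarith [neg_pi_div_two_lt_arctan β]

theorem Ioo_neg_arctan_subset_Ioo (β : ℝ) :
    Set.Ioo (-arctan β) (π / 2) ⊆ Set.Ioo (-(π / 2)) (π / 2) :=
  Set.Ioo_subset_Ioo_left (neg_le_neg (arctan_lt_pi_div_two β).le)

theorem cos_pos_of_mem_Ioo_neg_arctan {β θ : ℝ} (hθ : θ ∈ Set.Ioo (-arctan β) (π / 2)) :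
    0 < cos θ :=
  cos_pos_of_mem_Ioo (Ioo_neg_arctan_subset_Ioo β hθ)

section TanSubstitution

variable {k : ℝ}

theorem strictMonoOn_mul_add_tan (hk : 0 < k) (β : ℝ) :
    StrictMonoOn (fun θ => k * (β + tan θ)) (Set.Ioo (-(π / 2)) (π / 2)) :=
  fun _ hx _ hy hxy => mul_lt_mul_of_pos_left
    (add_lt_add_right (strictMonoOn_tan hx hy hxy) β) hk

theorem image_mul_add_tan (hk : 0 < k) (β : ℝ) :
    (fun θ => k * (β + tan θ)) '' Set.Ioo (-arctan β) (π / 2) = Set.Ioi 0 := by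
  apply Set.Subset.antisymm
  · rintro _ ⟨θ, hθ, rfl⟩
    have htan : tan (arctan (-β)) < tan θ :=
      strictMonoOn_tan (arctan_mem_Ioo _) (Ioo_neg_arctan_subset_Ioo β hθ) (arctan_neg β ▸ hθ.1)
    rw [tan_arctan] at htan
    exact mul_pos hk (by linarith)
  · intro y (hy : 0 < y)
    refine ⟨arctan (y / k - β), ⟨?_, arctan_lt_pi_div_two _⟩, ?_⟩
    · rw [← arctan_neg, arctan_lt_arctan_iff]
      linarith [div_pos hy hk]
    · simp only [tan_arctan, add_sub_cancel, mul_div_cancel₀ y hk.ne']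

theorem hasDerivAt_mul_add_tan (k β : ℝ) {θ : ℝ} (hθ : cos θ ≠ 0) :
    HasDerivAt (fun θ => k * (β + tan θ)) (k / cos θ ^ 2) θ := by
  simpa only [mul_one_div] using ((hasDerivAt_tan hθ).const_add β).const_mul k

variable {E : Type*} [NormedAddCommGroup E] [NormedSpace ℝ E]

theorem integrableOn_Ioi_zero_iff_intervalIntegrable_tan (hk : 0 < k) (β : ℝ) (f : ℝ → E) :
    IntegrableOn f (Set.Ioi 0) ↔
      IntervalIntegrable (fun θ => (k / cos θ ^ 2) • f (k * (β + tan θ))) volume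
        (-arctan β) (π / 2) := by
  rw [← image_mul_add_tan hk β,
    intervalIntegrable_iff_integrableOn_Ioo_of_le (neg_arctan_le_pi_div_two β)]
  exact integrableOn_image_iff_integrableOn_deriv_smul_of_monotoneOn measurableSet_Ioo
    (fun _ hθ => (hasDerivAt_mul_add_tan k β
      (cos_pos_of_mem_Ioo_neg_arctan hθ).ne').hasDerivWithinAt)
    ((strictMonoOn_mul_add_tan hk β).mono (Ioo_neg_arctan_subset_Ioo β)).monotoneOn f

theorem integral_Ioi_zero_eq_integral_tan (hk : 0 < k) (β : ℝ) (f : ℝ → E) :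
    ∫ y in Set.Ioi 0, f y =
      ∫ θ in (-arctan β)..(π / 2), (k / cos θ ^ 2) • f (k * (β + tan θ)) := by
  rw [← image_mul_add_tan hk β, intervalIntegral.integral_of_le (neg_arctan_le_pi_div_two β),
    integral_Ioc_eq_integral_Ioo]
  exact integral_image_eq_integral_deriv_smul_of_monotoneOn measurableSet_Ioo
    (fun _ hθ => (hasDerivAt_mul_add_tan k β
      (cos_pos_of_mem_Ioo_neg_arctan hθ).ne').hasDerivWithinAt)
    ((strictMonoOn_mul_add_tan hk β).mono (Ioo_neg_arctan_subset_Ioo β)).monotoneOn f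

end TanSubstitution

section AngularIntegral

/-- The integrand in the angular variable: `(Y² - (α + 1) X²) cos ^ α θ`, where
`(X, Y) = (cos θ - β sin θ, β cos θ + sin θ)`. -/
noncomputable def angularDensity (α β θ : ℝ) : ℝ :=
  ((β * cos θ + sin θ) ^ 2 - (α + 1) * (cos θ - β * sin θ) ^ 2) * cos θ ^ α

/-- A primitive of `angularDensity α β + α cos ^ α`. It is `-(X Y + β) cos ^ α θ` with one factor
`cos θ` moved into the power, which makes it continuous at `π / 2` for every `α > -1`. -/
noncomputable def angularPrimitive (α β θ : ℝ) : ℝ :=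
  ((β ^ 2 - 1) * sin θ - 2 * β * cos θ) * cos θ ^ (α + 1)

variable {α : ℝ}

theorem continuous_angularPrimitive (hα : -1 < α) (β : ℝ) : Continuous (angularPrimitive α β) := by
  have hcos := continuous_cos_rpow (p := α + 1) (by linarith)
  unfold angularPrimitive
  fun_prop

theorem hasDerivAt_angularPrimitive (α β : ℝ) {θ : ℝ} (hθ : 0 < cos θ) :
    HasDerivAt (angularPrimitive α β) (angularDensity α β θ + α * cos θ ^ α) θ := by
  have hlin : HasDerivAt (fun θ => (β ^ 2 - 1) * sin θ - 2 * β * cos θ)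
      ((β ^ 2 - 1) * cos θ - 2 * β * -sin θ) θ :=
    ((hasDerivAt_sin θ).const_mul _).sub ((hasDerivAt_cos θ).const_mul _)
  refine (hlin.mul (hasDerivAt_cos_rpow_add_one α hθ.ne')).congr_deriv ?_
  rw [angularDensity, rpow_add_one hθ.ne']
  linear_combination α * cos θ ^ α * sin_sq_add_cos_sq θ

theorem angularPrimitive_pi_div_two (hα : -1 < α) (β : ℝ) : angularPrimitive α β (π / 2) = 0 := by
  rw [angularPrimitive, cos_pi_div_two, zero_rpow (by linarith), mul_zero]

theorem angularPrimitive_neg_arctan (α β : ℝ) :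
    angularPrimitive α β (-arctan β) = -β * (β ^ 2 + 1) ^ (-α / 2) := by
  have hcos : 0 < cos (arctan β) := cos_arctan_pos β
  have hsin : sin (arctan β) = β * cos (arctan β) := by
    rw [← tan_mul_cos hcos.ne', tan_arctan]
  have hsq : (β ^ 2 + 1) * cos (arctan β) ^ 2 = 1 := by
    rw [cos_sq_arctan, add_comm, mul_one_div_cancel (by positivity)]
  rw [angularPrimitive, sin_neg, cos_neg, hsin, rpow_add_one hcos.ne', ← cos_arctan_rpow]
  linear_combination -β * cos (arctan β) ^ α * hsq

theorem intervalIntegrable_cos_rpow_neg_arctan (hα : -1 < α) (β : ℝ) :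
    IntervalIntegrable (fun θ => cos θ ^ α) volume (-arctan β) (π / 2) :=
  (intervalIntegrable_cos_rpow hα).mono_set <| Set.uIcc_subset_uIcc_right <|
    Set.mem_uIcc_of_le (neg_le_neg (arctan_lt_pi_div_two β).le) (neg_arctan_le_pi_div_two β)

theorem intervalIntegrable_angularDensity (hα : -1 < α) (β : ℝ) :
    IntervalIntegrable (angularDensity α β) volume (-arctan β) (π / 2) :=
  (intervalIntegrable_cos_rpow_neg_arctan hα β).continuousOn_mul (by fun_prop)

theorem integral_angularDensity (hα : -1 < α) (β : ℝ) :
    ∫ θ in (-arctan β)..(π / 2), angularDensity α β θ =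
      β * (β ^ 2 + 1) ^ (-α / 2) - α * ∫ θ in (-arctan β)..(π / 2), cos θ ^ α := by
  have hdens := intervalIntegrable_angularDensity hα β
  have hcos := (intervalIntegrable_cos_rpow_neg_arctan hα β).const_mul α
  have hftc := intervalIntegral.integral_eq_sub_of_hasDerivAt_of_le (neg_arctan_le_pi_div_two β)
    (continuous_angularPrimitive hα β).continuousOn
    (fun θ hθ => hasDerivAt_angularPrimitive α β (cos_pos_of_mem_Ioo_neg_arctan hθ))
    (hdens.add hcos)
  rw [intervalIntegral.integral_add hdens hcos, intervalIntegral.integral_const_mul,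
    angularPrimitive_pi_div_two hα, angularPrimitive_neg_arctan] at hftc
  linarith

theorem F_eq_rpow_mul_integral_angularDensity (hα : -1 < α) (β : ℝ) :
    F α β = (β ^ 2 + 1) ^ (α / 2 - 1) * ∫ θ in (-arctan β)..(π / 2), angularDensity α β θ := by
  have hβ : 0 < β ^ 2 + 1 := by positivity
  have hinv : ((β ^ 2 + 1) ^ (1 - α / 2))⁻¹ = (β ^ 2 + 1) ^ (α / 2 - 1) := by
    rw [← rpow_neg hβ.le, neg_sub]
  have hmul : (β ^ 2 + 1) ^ (α / 2 - 1) * (β ^ 2 + 1) ^ (-α / 2) = (β ^ 2 + 1)⁻¹ := by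
    rw [← rpow_add hβ, ← rpow_neg_one]
    congr 1
    ring
  rw [F, integral_angularDensity hα, div_eq_mul_inv β, div_eq_mul_inv α, hinv, ← hmul]
  ring

end AngularIntegral

section Kernel

/-- The derivative `∂ₓ (x / |(x, y)| ^ (2 + α))` of the Riesz-type kernel of order `α`; the integrand
of the theorem is its restriction to the line of points `(a - β y, y)`. -/
noncomputable def rieszKernelDeriv (α x y : ℝ) : ℝ :=
  (y ^ 2 - (α + 1) * x ^ 2) / (x ^ 2 + y ^ 2) ^ (2 + α / 2)

theorem rieszKernelDeriv_mul_mul (α x y : ℝ) {t : ℝ} (ht : 0 < t) :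
    rieszKernelDeriv α (t * x) (t * y) = t ^ (-(2 + α)) * rieszKernelDeriv α x y := by
  have hpow : (t ^ 2) ^ (2 + α / 2) = t ^ 2 * t ^ (2 + α) := by
    rw [← rpow_two, ← rpow_mul ht.le, ← rpow_add ht]
    congr 1
    ring
  rw [rieszKernelDeriv, rieszKernelDeriv, mul_pow, mul_pow, ← mul_add,
    mul_rpow (by positivity) (by positivity), hpow, rpow_neg ht.le]
  field_simp

theorem rieszKernelDeriv_mul_cos_rpow (α β θ : ℝ) :
    rieszKernelDeriv α (cos θ - β * sin θ) (β * cos θ + sin θ) * cos θ ^ α =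
      angularDensity α β θ / (β ^ 2 + 1) ^ (2 + α / 2) := by
  have hnorm : (cos θ - β * sin θ) ^ 2 + (β * cos θ + sin θ) ^ 2 = β ^ 2 + 1 := by
    linear_combination (β ^ 2 + 1) * sin_sq_add_cos_sq θ
  rw [rieszKernelDeriv, hnorm, angularDensity, div_mul_eq_mul_div]

theorem rieszKernelDeriv_line_tan (α β : ℝ) {a θ : ℝ} (ha : 0 < a) (hθ : 0 < cos θ) :
    rieszKernelDeriv α (a - β * (a / (β ^ 2 + 1) * (β + tan θ)))
        (a / (β ^ 2 + 1) * (β + tan θ)) =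
      (a / ((β ^ 2 + 1) * cos θ)) ^ (-(2 + α)) *
        rieszKernelDeriv α (cos θ - β * sin θ) (β * cos θ + sin θ) := by
  have hy : a / (β ^ 2 + 1) * (β + tan θ) =
      a / ((β ^ 2 + 1) * cos θ) * (β * cos θ + sin θ) := by
    rw [tan_eq_sin_div_cos]
    field_simp
  have hx : a - β * (a / ((β ^ 2 + 1) * cos θ) * (β * cos θ + sin θ)) =
      a / ((β ^ 2 + 1) * cos θ) * (cos θ - β * sin θ) := by
    field_simp
    ring
  rw [hy, hx, rieszKernelDeriv_mul_mul _ _ _ (by positivity)]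

theorem deriv_mul_rieszKernelDeriv_line_tan (α β : ℝ) {a θ : ℝ} (ha : 0 < a) (hθ : 0 < cos θ) :
    a / (β ^ 2 + 1) / cos θ ^ 2 *
        rieszKernelDeriv α (a - β * (a / (β ^ 2 + 1) * (β + tan θ)))
          (a / (β ^ 2 + 1) * (β + tan θ)) =
      a ^ (-(1 + α)) * (β ^ 2 + 1) ^ (α / 2 - 1) * angularDensity α β θ := by
  have hβ : 0 < β ^ 2 + 1 := by positivity
  set t := a / ((β ^ 2 + 1) * cos θ) with ht
  have hjac : a / (β ^ 2 + 1) / cos θ ^ 2 = t / cos θ := by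
    rw [ht]
    field_simp
  have ht_rpow : t ^ (-(1 + α)) =
      a ^ (-(1 + α)) * (β ^ 2 + 1) ^ (1 + α) * (cos θ ^ α * cos θ) := by
    rw [ht, div_rpow ha.le (by positivity), mul_rpow hβ.le hθ.le, rpow_neg hβ.le, rpow_neg hθ.le,
      ← mul_inv, div_inv_eq_mul, ← mul_assoc, add_comm 1 α, rpow_add_one hθ.ne']
  have hβ_rpow : (β ^ 2 + 1) ^ (1 + α) = (β ^ 2 + 1) ^ (α / 2 - 1) * (β ^ 2 + 1) ^ (2 + α / 2) := by
    rw [← rpow_add hβ]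
    congr 1
    ring
  calc
    _ = t / cos θ * (t ^ (-(2 + α)) *
          rieszKernelDeriv α (cos θ - β * sin θ) (β * cos θ + sin θ)) := by
      rw [hjac, rieszKernelDeriv_line_tan α β ha hθ]
    _ = t ^ (-(1 + α)) / cos θ *
          rieszKernelDeriv α (cos θ - β * sin θ) (β * cos θ + sin θ) := by
      rw [show -(1 + α) = -(2 + α) + 1 by ring, rpow_add_one (by positivity)]
      ring
    _ = a ^ (-(1 + α)) * (β ^ 2 + 1) ^ (1 + α) *
          (rieszKernelDeriv α (cos θ - β * sin θ) (β * cos θ + sin θ) * cos θ ^ α) := by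
      rw [ht_rpow]
      field_simp
    _ = a ^ (-(1 + α)) * (β ^ 2 + 1) ^ (α / 2 - 1) * angularDensity α β θ := by
      rw [rieszKernelDeriv_mul_cos_rpow, hβ_rpow]
      field_simp

end Kernel

theorem stmt7_general (α β a : ℝ) (hα : -1 < α) (ha : 0 < a) :
    IntegrableOn
      (fun y : ℝ => (y ^ 2 - (α + 1) * (a - β * y) ^ 2) /
        ((a - β * y) ^ 2 + y ^ 2) ^ (2 + α / 2)) (Set.Ioi 0) ∧
    ∫ y in Set.Ioi (0 : ℝ),
        (y ^ 2 - (α + 1) * (a - β * y) ^ 2) / ((a - β * y) ^ 2 + y ^ 2) ^ (2 + α / 2) =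
      F α β / a ^ (1 + α) := by
  have hk : 0 < a / (β ^ 2 + 1) := by positivity
  have hsubst : Set.EqOn
      (fun θ => (a / (β ^ 2 + 1) / cos θ ^ 2) •
        rieszKernelDeriv α (a - β * (a / (β ^ 2 + 1) * (β + tan θ)))
          (a / (β ^ 2 + 1) * (β + tan θ)))
      (fun θ => a ^ (-(1 + α)) * (β ^ 2 + 1) ^ (α / 2 - 1) * angularDensity α β θ)
      (Set.uIoo (-arctan β) (π / 2)) := by
    rw [Set.uIoo_of_le (neg_arctan_le_pi_div_two β)]
    exact fun θ hθ => deriv_mul_rieszKernelDeriv_line_tan α β ha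
      (cos_pos_of_mem_Ioo_neg_arctan hθ)
  change IntegrableOn (fun y => rieszKernelDeriv α (a - β * y) y) (Set.Ioi 0) ∧
    ∫ y in Set.Ioi 0, rieszKernelDeriv α (a - β * y) y = F α β / a ^ (1 + α)
  constructor
  · rw [integrableOn_Ioi_zero_iff_intervalIntegrable_tan hk β, intervalIntegrable_congr_uIoo hsubst]
    exact (intervalIntegrable_angularDensity hα β).const_mul _
  · rw [integral_Ioi_zero_eq_integral_tan hk β, intervalIntegral.integral_congr_uIoo hsubst,
      intervalIntegral.integral_const_mul, F_eq_rpow_mul_integral_angularDensity hα, rpow_neg ha.le]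
    ring

theorem stmt7 (α β a : ℝ) (hα0 : 0 ≤ α) (hα2 : α < 2) (hβ : 0 ≤ β) (ha : 0 < a) :
    MeasureTheory.IntegrableOn
      (fun y : ℝ => (y ^ 2 - (α + 1) * (a - β * y) ^ 2) /
        ((a - β * y) ^ 2 + y ^ 2) ^ (2 + α / 2)) (Set.Ioi 0) ∧
    ∫ y in Set.Ioi (0 : ℝ),
        (y ^ 2 - (α + 1) * (a - β * y) ^ 2) / ((a - β * y) ^ 2 + y ^ 2) ^ (2 + α / 2) =
      F α β / a ^ (1 + α) :=
  stmt7_general α β a (by linarith) ha
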